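/- arXiv:1808.05460 — 2 statements merged into one kernel-verified Lean document; each statement's English description precedes it below -/
import Mathlib

section
/- Fix an integer n ≥ 1 and subsets L ⊆ [0, n−1] and R ⊆ [n, 2n−1]. Let a be an integer with a ≥ 2 such that [n, 2n−a] ⊆ L + L and [2n+a−2, 3n−2] ⊆ R + R, and set τ(L) = |{i ∈ L : i ≤ n−a+1}| and τ(R) = |{i ∈ R : i ≥ n+a−2}|. For every ε > 0 there exists m_0 such that for all integers m ≥ m_0 the following holds: the number of subsets M of [n, n+m−1] for which the set S = L ∪ M ∪ (R+m) does NOT satisfy [2n−a+1, 2n+2m+a−3] ⊆ S + S is at most ((a−2)(2^{−τ(R)} + 2^{−τ(L)}) + 6(2^{−|L|} + 2^{−|R|}) + ε) · 2^{m}. -/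
open Finset Pointwise

/-!
The count is a union bound over the values `k` that `S + S` may miss. Let `M` be a uniformly random
subset of `[n, n+m-1]`. The values `k ≤ 2n+m-1` are controlled by the sums from `L ∪ M` alone.
* For each of the `a-2` values `k ∈ [2n-a+1, 2n-2]`, missing `k` forces `k - l ∉ M` for all
  `l ∈ L` with `l ≤ n-a+1`, an event of probability `2^{-τ(L)}`.
* For `k = 2n-1+j` with `j ≥ 0`, missing `k` forces `M` to contain no `x` of the `j`-element
  interval `[n, k-n]` together with its mirror image `k - x`, an event of probability at most
  `3^{⌊j/2⌋} / 2^j`. As long as `j ≤ m-n`, it also forces `k - l ∉ M` for all `l ∈ L`, which is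
  independent of the first event and has probability `2^{-|L|}`. The numbers `3^{⌊j/2⌋} / 2^j` sum
  to `6`, so the values with `j ≤ m-n` contribute at most `6 · 2^{-|L|}`, and the remaining ones are
  a bounded number of terms of a convergent series.

The values `k ≥ 2n+m-1` are reduced to these by the reflection `x ↦ 2n+m-1-x`, which preserves
`[n, n+m-1]` and exchanges the roles of `L` and `R`.
-/

open Filter Topology

section MirrorFree

variable {α : Type*} [DecidableEq α]

lemma card_le_card_mul_card_of_inter_mem {F 𝒜 ℬ : Finset (Finset α)} {A B : Finset α}
    (hF : ∀ M ∈ F, M ⊆ A ∪ B) (hA : ∀ M ∈ F, M ∩ A ∈ 𝒜) (hB : ∀ M ∈ F, M ∩ B ∈ ℬ) :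
    #F ≤ #𝒜 * #ℬ := by
  rw [← card_product]
  refine card_le_card_of_injOn (fun M ↦ (M ∩ A, M ∩ B))
    (fun M hM ↦ mem_product.2 ⟨hA M hM, hB M hM⟩) fun M hM N hN h ↦ ?_
  obtain ⟨hMA, hMB⟩ := Prod.ext_iff.1 h
  rw [← inter_eq_left.2 (hF M hM), ← inter_eq_left.2 (hF N hN), inter_union_distrib_left,
    inter_union_distrib_left]
  exact congrArg₂ _ hMA hMB

/-- The subsets of `J` that contain no `x` together with its mirror image `σ x`; in particular they
contain no fixed point of `σ`. -/
def mirrorFree (σ : α → α) (J : Finset α) : Finset (Finset α) :=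
  {M ∈ J.powerset | ∀ x ∈ M, σ x ∉ M}

lemma mem_mirrorFree {σ : α → α} {J M : Finset α} :
    M ∈ mirrorFree σ J ↔ M ⊆ J ∧ ∀ x ∈ M, σ x ∉ M := by
  rw [mirrorFree, mem_filter, mem_powerset]

lemma inter_mem_mirrorFree {σ : α → α} {J M : Finset α} (hM : M ∈ mirrorFree σ J) (A : Finset α) :
    M ∩ A ∈ mirrorFree σ A :=
  mem_mirrorFree.2 ⟨inter_subset_right, fun x hx hσx ↦
    (mem_mirrorFree.1 hM).2 x (mem_inter.1 hx).1 (mem_inter.1 hσx).1⟩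

lemma card_mirrorFree_pair_le (σ : α → α) (x : α) :
    #(mirrorFree σ {x, σ x}) ≤ 3 ^ (#{x, σ x} / 2) := by
  by_cases hx : x = σ x
  · have : mirrorFree σ {x, σ x} ⊆ {∅} := by
      intro M hM
      obtain ⟨hMx, hM⟩ := mem_mirrorFree.1 hM
      rw [← hx, pair_eq_singleton, subset_singleton_iff] at hMx
      rcases hMx with rfl | rfl
      · exact mem_singleton_self ∅
      · exact absurd (mem_singleton.2 hx.symm) (hM x (mem_singleton_self x))
    simpa [← hx] using card_le_card this
  · have : mirrorFree σ {x, σ x} ⊆ ({x, σ x} : Finset α).powerset.erase {x, σ x} := by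
      intro M hM
      obtain ⟨hMx, hM⟩ := mem_mirrorFree.1 hM
      refine mem_erase.2 ⟨?_, mem_powerset.2 hMx⟩
      rintro rfl
      exact hM x (mem_insert_self ..) (mem_insert_of_mem (mem_singleton_self _))
    simpa [card_erase_of_mem, card_powerset, card_pair hx] using card_le_card this

lemma card_mirrorFree_le {σ : α → α} (hσ : Function.Involutive σ) (J : Finset α)
    (hJ : ∀ x ∈ J, σ x ∈ J) : #(mirrorFree σ J) ≤ 3 ^ (#J / 2) := by
  induction J using Finset.strongInduction with
  | H J ih =>
    obtain rfl | ⟨x, hx⟩ := J.eq_empty_or_nonempty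
    · exact (card_filter_le _ _).trans (by simp)
    set P : Finset α := {x, σ x} with hP
    have hPJ : P ⊆ J := insert_subset hx (singleton_subset_iff.2 (hJ x hx))
    have hrest : ∀ y ∈ J \ P, σ y ∈ J \ P := by
      intro y hy
      simp only [hP, Finset.mem_sdiff, mem_insert, mem_singleton, not_or] at hy ⊢
      exact ⟨hJ y hy.1, fun h ↦ hy.2.2 (by rw [← h, hσ y]), fun h ↦ hy.2.1 (hσ.injective h)⟩
    calc #(mirrorFree σ J) ≤ #(mirrorFree σ P) * #(mirrorFree σ (J \ P)) :=
          card_le_card_mul_card_of_inter_mem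
            (fun M hM ↦ by
              rw [union_sdiff_of_subset hPJ]
              exact (mem_mirrorFree.1 hM).1)
            (fun M hM ↦ inter_mem_mirrorFree hM P) (fun M hM ↦ inter_mem_mirrorFree hM (J \ P))
      _ ≤ 3 ^ (#P / 2) * 3 ^ (#(J \ P) / 2) :=
          Nat.mul_le_mul (card_mirrorFree_pair_le σ x)
            (ih _ (sdiff_ssubset hPJ ⟨x, mem_insert_self ..⟩) hrest)
      _ = 3 ^ (#P / 2 + #(J \ P) / 2) := (pow_add ..).symm
      _ ≤ 3 ^ (#J / 2) := by
          refine Nat.pow_le_pow_right three_pos ?_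
          have := card_sdiff_add_card_eq_card hPJ
          omega

/-- An upper bound for the probability that a uniformly random subset of a `j`-element set contains
no element together with its mirror image under a given involution. The bound is attained by
involutions with at most one fixed point. -/
noncomputable def mirrorFreeBound (j : ℕ) : ℝ := 3 ^ (j / 2) / 2 ^ j

lemma mirrorFreeBound_nonneg (j : ℕ) : 0 ≤ mirrorFreeBound j := by
  unfold mirrorFreeBound; positivity

lemma hasSum_mirrorFreeBound : HasSum mirrorFreeBound 6 := by
  have geom : HasSum (fun i : ℕ ↦ (3 / 4 : ℝ) ^ i) 4 := by
    convert hasSum_geometric_of_lt_one (r := (3 / 4 : ℝ)) (by norm_num) (by norm_num) using 1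
    norm_num
  have even (i : ℕ) : mirrorFreeBound (2 * i) = (3 / 4) ^ i := by
    rw [mirrorFreeBound, Nat.mul_div_cancel_left i two_pos, pow_mul, div_pow]
    norm_num
  have odd (i : ℕ) : mirrorFreeBound (2 * i + 1) = 2⁻¹ * (3 / 4) ^ i := by
    rw [mirrorFreeBound, show (2 * i + 1) / 2 = i by omega, pow_succ, pow_mul, div_pow]
    norm_num
    ring
  have total : (4 + 2⁻¹ * 4 : ℝ) = 6 := by norm_num
  rw [← total]
  exact HasSum.even_add_odd (by simpa only [even] using geom)
    (by simpa only [odd] using geom.mul_left 2⁻¹)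

lemma tendsto_sum_range_mirrorFreeBound (c : ℕ) :
    Tendsto (fun q ↦ ∑ i ∈ range c, mirrorFreeBound (q + i)) atTop (𝓝 0) := by
  have h := hasSum_mirrorFreeBound.summable.tendsto_atTop_zero
  simpa only [sum_const_zero] using
    tendsto_finsetSum (range c) fun i _ ↦ (tendsto_add_atTop_iff_nat i).2 h

end MirrorFree

section Uncovered

variable {G : Type*} [Add G] [DecidableEq G]

/-- The subsets `M` of `I` for which the sums of two elements of `L ∪ M` do not cover all of `K`. -/
def uncovered (I L K : Finset G) : Finset (Finset G) :=
  {M ∈ I.powerset | ¬ K ⊆ (L ∪ M) + (L ∪ M)}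

lemma mem_uncovered {I L K M : Finset G} :
    M ∈ uncovered I L K ↔ M ⊆ I ∧ ¬ K ⊆ (L ∪ M) + (L ∪ M) := by
  rw [uncovered, mem_filter, mem_powerset]

lemma uncovered_anti {I L L' K : Finset G} (h : L ⊆ L') : uncovered I L' K ⊆ uncovered I L K := by
  intro M hM
  obtain ⟨hMI, hMK⟩ := mem_uncovered.1 hM
  have hLM : L ∪ M ⊆ L' ∪ M := union_subset_union_left h
  exact mem_uncovered.2 ⟨hMI, fun hK ↦ hMK (hK.trans (add_subset_add hLM hLM))⟩

lemma uncovered_union (I L K K' : Finset G) :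
    uncovered I L (K ∪ K') = uncovered I L K ∪ uncovered I L K' := by
  simp only [uncovered, union_subset_iff, not_and_or, filter_or]

lemma card_uncovered_union_le (I L K K' : Finset G) :
    #(uncovered I L (K ∪ K')) ≤ #(uncovered I L K) + #(uncovered I L K') := by
  rw [uncovered_union]
  exact card_union_le _ _

lemma card_uncovered_image_le {ι : Type*} (I L : Finset G) (s : Finset ι) (f : ι → G) :
    #(uncovered I L (s.image f)) ≤ ∑ i ∈ s, #(uncovered I L {f i}) := by
  refine (card_le_card fun M hM ↦ ?_).trans card_biUnion_le
  obtain ⟨hMI, hM⟩ := mem_uncovered.1 hM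
  simp only [image_subset_iff, not_forall] at hM
  obtain ⟨i, hi, hiM⟩ := hM
  exact mem_biUnion.2 ⟨i, hi, mem_uncovered.2 ⟨hMI, singleton_subset_iff.not.2 hiM⟩⟩

end Uncovered

section Reflection

variable {G : Type*} [AddCommGroup G] [DecidableEq G]

lemma card_uncovered_le_card_uncovered_image_sub (I L K : Finset G) (c : G) :
    #(uncovered I L K) ≤
      #(uncovered (I.image (c - ·)) (L.image (c - ·)) (K.image (c + c - ·))) := by
  have hinj (d : G) : Function.Injective (d - ·) := sub_right_injective
  refine card_le_card_of_injOn (image (c - ·)) (fun M hM ↦ ?_) (image_injective (hinj c)).injOn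
  obtain ⟨hMI, hM⟩ := mem_uncovered.1 hM
  have hadd : ((L ∪ M) + (L ∪ M)).image (c + c - ·) =
      (L ∪ M).image (c - ·) + (L ∪ M).image (c - ·) :=
    image_image₂_distrib fun x y ↦ add_sub_add_comm c c x y
  refine mem_uncovered.2 ⟨image_subset_image hMI, ?_⟩
  rwa [← image_union, ← hadd, image_subset_image_iff (hinj _)]

lemma card_uncovered_singleton_le {I J L A : Finset G} {k : G} (hJI : J ⊆ I)
    (hJ : ∀ x ∈ J, k - x ∈ J) (hAL : A ⊆ L) (hA : ∀ l ∈ A, k - l ∈ I \ J) :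
    (#(uncovered I L {k}) : ℝ) ≤ mirrorFreeBound #J * 2 ^ (-(#A : ℤ)) * 2 ^ #I := by
  set T := A.image (k - ·)
  have hT : T ⊆ I \ J := image_subset_iff.2 hA
  have hsum {M : Finset G} (hM : M ∈ uncovered I L {k}) {x y : G} (hx : x ∈ L ∪ M) (hy : y ∈ M) :
      x + y ≠ k := by
    rintro rfl
    exact (mem_uncovered.1 hM).2 (singleton_subset_iff.2 (add_mem_add hx (mem_union_right L hy)))
  have hcount : #(uncovered I L {k}) ≤ 3 ^ (#J / 2) * 2 ^ #((I \ J) \ T) := by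
    refine (card_le_card_mul_card_of_inter_mem (𝒜 := mirrorFree (k - ·) J)
      (ℬ := ((I \ J) \ T).powerset) (A := J) (B := I \ J) ?_ ?_ ?_).trans
      (Nat.mul_le_mul (card_mirrorFree_le (sub_sub_cancel k) J hJ) (card_powerset _).le)
    · intro M hM
      rw [union_sdiff_of_subset hJI]
      exact (mem_uncovered.1 hM).1
    · intro M hM
      refine mem_mirrorFree.2 ⟨inter_subset_right, fun x hx hkx ↦ ?_⟩
      exact hsum hM (mem_union_right L (mem_inter.1 hx).1) (mem_inter.1 hkx).1
        (add_sub_cancel x k)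
    · intro M hM
      rw [mem_powerset, subset_sdiff, disjoint_right]
      refine ⟨inter_subset_right, fun y hy hyM ↦ ?_⟩
      obtain ⟨l, hl, rfl⟩ := mem_image.1 hy
      exact hsum hM (mem_union_left M (hAL hl)) (mem_inter.1 hyM).1 (add_sub_cancel l k)
  have hcard : #I = #((I \ J) \ T) + #A + #J := by
    rw [← card_sdiff_add_card_eq_card hJI, ← card_sdiff_add_card_eq_card hT,
      card_image_of_injective A sub_right_injective]
  calc (#(uncovered I L {k}) : ℝ) ≤ 3 ^ (#J / 2) * 2 ^ #((I \ J) \ T) := by exact_mod_cast hcount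
    _ = mirrorFreeBound #J * 2 ^ (-(#A : ℤ)) * 2 ^ #I := by
      rw [mirrorFreeBound, hcard, zpow_neg, zpow_natCast, pow_add, pow_add]
      field_simp

end Reflection

lemma finset_image_const_sub_Icc {α : Type*} [AddCommGroup α] [PartialOrder α]
    [IsOrderedAddMonoid α] [LocallyFiniteOrder α] [DecidableEq α] (c x y : α) :
    (Icc x y).image (c - ·) = Icc (c - y) (c - x) := by
  apply coe_injective
  push_cast
  exact Set.image_const_sub_Icc c x y

section Interval

variable {n : ℤ} {L : Finset ℤ} {c p : ℕ}

lemma card_uncovered_Icc_singleton_le {A : Finset ℤ} {j : ℕ} (hAL : A ⊆ L)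
    (hA : A ⊆ Ico (n - c) n) (hj : j + c ≤ p) :
    (#(uncovered (Icc n (n + p - 1)) L {2 * n - 1 + (j : ℤ)}) : ℝ) ≤
      mirrorFreeBound j * 2 ^ (-(#A : ℤ)) * 2 ^ p := by
  have h := card_uncovered_singleton_le (I := Icc n (n + p - 1)) (J := Icc n (n + j - 1))
    (k := 2 * n - 1 + j) (Icc_subset_Icc le_rfl (by omega)) ?_ hAL ?_
  · rwa [Int.card_Icc, Int.card_Icc, show (n + j - 1 + 1 - n).toNat = j by omega,
      show (n + p - 1 + 1 - n).toNat = p by omega] at h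
  · intro x hx
    rw [mem_Icc] at hx ⊢
    omega
  · intro l hl
    have := mem_Ico.1 (hA hl)
    rw [Finset.mem_sdiff, mem_Icc, mem_Icc]
    omega

lemma card_uncovered_Icc_low_le {a : ℤ} (ha : 2 ≤ a) (hL : L ⊆ Ico (n - c) n) (hp : c ≤ p + 1) :
    (#(uncovered (Icc n (n + p - 1)) L (Icc (2 * n - a + 1) (2 * n - 2))) : ℝ) ≤
      (a - 2) * 2 ^ (-(#{i ∈ L | i ≤ n - a + 1} : ℤ)) * 2 ^ p := by
  set τ := #{i ∈ L | i ≤ n - a + 1}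
  set K := Icc (2 * n - a + 1) (2 * n - 2)
  have hK : ((#K : ℤ) : ℝ) = (a : ℝ) - 2 := by
    rw [Int.card_Icc, Int.toNat_of_nonneg (by omega)]
    push_cast
    ring
  have hmiss : ∀ k ∈ K, (#(uncovered (Icc n (n + p - 1)) L {k}) : ℝ) ≤ 2 ^ (-(τ : ℤ)) * 2 ^ p := by
    intro k hk
    have h := card_uncovered_singleton_le (I := Icc n (n + p - 1)) (J := ∅) (k := k)
      (empty_subset _) (by simp) (filter_subset (· ≤ n - a + 1) L) fun l hl ↦ ?_
    · simpa [mirrorFreeBound] using h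
    · obtain ⟨hlL, hla⟩ := mem_filter.1 hl
      have := mem_Ico.1 (hL hlL)
      have := mem_Icc.1 hk
      rw [sdiff_empty, mem_Icc]
      omega
  calc (#(uncovered (Icc n (n + p - 1)) L K) : ℝ)
      ≤ ∑ k ∈ K, (#(uncovered (Icc n (n + p - 1)) L {k}) : ℝ) := by
        have := card_uncovered_image_le (Icc n (n + p - 1)) L K id
        rw [image_id] at this
        exact_mod_cast this
    _ ≤ #K • (2 ^ (-(τ : ℤ)) * 2 ^ p : ℝ) := sum_le_card_nsmul K _ _ hmiss
    _ = (a - 2) * 2 ^ (-(τ : ℤ)) * 2 ^ p := by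
        rw [nsmul_eq_mul, ← Int.cast_natCast, hK, mul_assoc]

lemma card_uncovered_Icc_high_le {q : ℕ} (hL : L ⊆ Ico (n - c) n) (hp : p + 1 = q + c) :
    (#(uncovered (Icc n (n + p - 1)) L (Icc (2 * n - 1) (2 * n + p - 1))) : ℝ) ≤
      (6 * 2 ^ (-(#L : ℤ)) + ∑ i ∈ range c, mirrorFreeBound (q + i)) * 2 ^ p := by
  set I := Icc n (n + p - 1)
  have hK : Icc (2 * n - 1) (2 * n + p - 1) =
      (range (q + c)).image (fun j : ℕ ↦ 2 * n - 1 + (j : ℤ)) := by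
    ext k
    simp only [mem_Icc, mem_image, mem_range]
    exact ⟨fun h ↦ ⟨(k - (2 * n - 1)).toNat, by omega, by omega⟩, by rintro ⟨j, hj, rfl⟩; omega⟩
  have hfull : ∑ j ∈ range q, (#(uncovered I L {2 * n - 1 + (j : ℤ)}) : ℝ) ≤
      6 * 2 ^ (-(#L : ℤ)) * 2 ^ p := by
    calc _ ≤ ∑ j ∈ range q, mirrorFreeBound j * 2 ^ (-(#L : ℤ)) * 2 ^ p :=
          sum_le_sum fun j hj ↦ card_uncovered_Icc_singleton_le Subset.rfl hL
            (by have := mem_range.1 hj; omega)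
      _ = (∑ j ∈ range q, mirrorFreeBound j) * 2 ^ (-(#L : ℤ)) * 2 ^ p := by
          rw [sum_mul, sum_mul]
      _ ≤ 6 * 2 ^ (-(#L : ℤ)) * 2 ^ p := by
          gcongr
          exact sum_le_hasSum _ (fun j _ ↦ mirrorFreeBound_nonneg j) hasSum_mirrorFreeBound
  have htail : ∑ i ∈ range c, (#(uncovered I L {2 * n - 1 + ((q + i : ℕ) : ℤ)}) : ℝ) ≤
      (∑ i ∈ range c, mirrorFreeBound (q + i)) * 2 ^ p := by
    rw [sum_mul]
    refine sum_le_sum fun i hi ↦ ?_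
    have hi := mem_range.1 hi
    simpa using card_uncovered_Icc_singleton_le (n := n) (c := 0) (p := p) (empty_subset L)
      (empty_subset _) (show q + i + 0 ≤ p by omega)
  calc (#(uncovered I L (Icc (2 * n - 1) (2 * n + p - 1))) : ℝ)
      ≤ ∑ j ∈ range (q + c), (#(uncovered I L {2 * n - 1 + (j : ℤ)}) : ℝ) := by
        rw [hK]
        exact_mod_cast card_uncovered_image_le I L (range (q + c)) _
    _ ≤ _ := by
        rw [sum_range_add, add_mul]
        exact add_le_add hfull htail

lemma eventually_card_uncovered_Icc_le (hL : ∀ l ∈ L, l < n) {a : ℤ} (ha : 2 ≤ a) {ε : ℝ}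
    (hε : 0 < ε) :
    ∀ᶠ p : ℕ in atTop,
      (#(uncovered (Icc n (n + p - 1)) L (Icc (2 * n - a + 1) (2 * n + p - 1))) : ℝ) ≤
      ((a - 2) * 2 ^ (-(#{i ∈ L | i ≤ n - a + 1} : ℤ)) + 6 * 2 ^ (-(#L : ℤ)) + ε) * 2 ^ p := by
  obtain ⟨c, hc⟩ : ∃ c : ℕ, L ⊆ Ico (n - c) n := by
    obtain ⟨b, hb⟩ := L.bddBelow
    refine ⟨(n - b).toNat, fun l hl ↦ mem_Ico.2 ⟨?_, hL l hl⟩⟩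
    have : b ≤ l := hb hl
    omega
  have htail := (tendsto_sum_range_mirrorFreeBound c).eventually_le_const hε
  have hshift : Tendsto (fun p : ℕ ↦ p + 1 - c) atTop atTop :=
    (tendsto_sub_atTop_nat c).comp (tendsto_add_atTop_nat 1)
  filter_upwards [hshift.eventually htail, eventually_ge_atTop c] with p hεp hcp
  have hK : Icc (2 * n - a + 1) (2 * n + p - 1) =
      Icc (2 * n - a + 1) (2 * n - 2) ∪ Icc (2 * n - 1) (2 * n + p - 1) := by
    ext k
    simp only [mem_union, mem_Icc]
    omega
  have hlow := card_uncovered_Icc_low_le ha hc (hcp.trans p.le_succ)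
  have hhigh := card_uncovered_Icc_high_le hc (show p + 1 = p + 1 - c + c by omega)
  calc _ ≤ (#(uncovered (Icc n (n + p - 1)) L (Icc (2 * n - a + 1) (2 * n - 2))) : ℝ) +
        #(uncovered (Icc n (n + p - 1)) L (Icc (2 * n - 1) (2 * n + p - 1))) := by
        rw [hK]
        exact_mod_cast card_uncovered_union_le _ _ _ _
    _ ≤ _ := add_le_add hlow hhigh
    _ = ((a - 2) * 2 ^ (-(#{i ∈ L | i ≤ n - a + 1} : ℤ)) + 6 * 2 ^ (-(#L : ℤ)) +
          ∑ i ∈ range c, mirrorFreeBound (p + 1 - c + i)) * 2 ^ p := by ring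
    _ ≤ _ := by gcongr

variable (n p) in
lemma card_uncovered_image_add_le (R : Finset ℤ) (a : ℤ) :
    #(uncovered (Icc n (n + p - 1)) (R.image (· + (p : ℤ)))
        (Icc (2 * n + p - 1) (2 * n + 2 * p + a - 3))) ≤
      #(uncovered (Icc n (n + p - 1)) (R.image (2 * n - 1 - ·))
        (Icc (2 * n - a + 1) (2 * n + p - 1))) := by
  have hI : (Icc n (n + p - 1)).image (2 * n + p - 1 - ·) = Icc n (n + p - 1) := by
    rw [finset_image_const_sub_Icc]
    congr 1 <;> ring
  have hR : (R.image (· + (p : ℤ))).image (2 * n + p - 1 - ·) = R.image (2 * n - 1 - ·) := by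
    rw [image_image]
    exact image_congr fun x _ ↦ by simp only [Function.comp_apply]; ring
  have hK : (Icc (2 * n + p - 1) (2 * n + 2 * p + a - 3)).image
      (2 * n + p - 1 + (2 * n + p - 1) - ·) = Icc (2 * n - a + 1) (2 * n + p - 1) := by
    rw [finset_image_const_sub_Icc]
    congr 1 <;> ring
  have h := card_uncovered_le_card_uncovered_image_sub (Icc n (n + p - 1)) (R.image (· + (p : ℤ)))
    (Icc (2 * n + p - 1) (2 * n + 2 * p + a - 3)) (2 * n + p - 1)
  rwa [hI, hR, hK] at h

variable (n p) in
lemma card_uncovered_union_image_add_le (L R : Finset ℤ) (a : ℤ) :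
    #(uncovered (Icc n (n + p - 1)) (L ∪ R.image (· + (p : ℤ)))
        (Icc (2 * n - a + 1) (2 * n + 2 * p + a - 3))) ≤
      #(uncovered (Icc n (n + p - 1)) L (Icc (2 * n - a + 1) (2 * n + p - 1))) +
        #(uncovered (Icc n (n + p - 1)) (R.image (2 * n - 1 - ·))
          (Icc (2 * n - a + 1) (2 * n + p - 1))) := by
  have hK : Icc (2 * n - a + 1) (2 * n + 2 * p + a - 3) =
      Icc (2 * n - a + 1) (2 * n + p - 1) ∪ Icc (2 * n + p - 1) (2 * n + 2 * p + a - 3) := by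
    ext k
    simp only [mem_union, mem_Icc]
    omega
  rw [hK]
  exact (card_uncovered_union_le _ _ _ _).trans <| Nat.add_le_add
    (card_le_card (uncovered_anti subset_union_left))
    ((card_le_card (uncovered_anti subset_union_right)).trans (card_uncovered_image_add_le n p R a))

end Interval

theorem stmt18_general (n : ℤ) (L R : Finset ℤ) (hL : ∀ l ∈ L, l < n) (hR : ∀ r ∈ R, n ≤ r)
    (a : ℤ) (ha : 2 ≤ a) (ε : ℝ) (hε : 0 < ε) :
    ∃ m₀ : ℤ, ∀ m : ℤ, m₀ ≤ m →
      (#{M ∈ (Icc n (n + m - 1)).powerset |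
          ¬ Icc (2 * n - a + 1) (2 * n + 2 * m + a - 3) ⊆
            (L ∪ M ∪ R.image (· + m)) + (L ∪ M ∪ R.image (· + m))} : ℝ) ≤
      ((a - 2) * (2 ^ (-(#{i ∈ R | n + a - 2 ≤ i} : ℤ)) + 2 ^ (-(#{i ∈ L | i ≤ n - a + 1} : ℤ))) +
        6 * (2 ^ (-(#L : ℤ)) + 2 ^ (-(#R : ℤ))) + ε) * 2 ^ m := by
  set R' := R.image (2 * n - 1 - ·)
  have hR' : ∀ r ∈ R', r < n := forall_mem_image.2 fun r hr ↦ by linarith [hR r hr]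
  have hcard : #R' = #R := card_image_of_injective R sub_right_injective
  have hτ : #{i ∈ R' | i ≤ n - a + 1} = #{i ∈ R | n + a - 2 ≤ i} := by
    rw [filter_image, card_image_of_injective _ sub_right_injective]
    exact congrArg card (filter_congr fun i _ ↦ by constructor <;> intro h <;> linarith)
  obtain ⟨p₀, h₀⟩ := eventually_atTop.1
    ((eventually_card_uncovered_Icc_le hL ha (half_pos hε)).and
      (eventually_card_uncovered_Icc_le hR' ha (half_pos hε)))
  refine ⟨p₀, fun m hm ↦ ?_⟩
  lift m to ℕ using (Int.natCast_nonneg p₀).trans hm with p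
  obtain ⟨hlower, hupper⟩ := h₀ p (by exact_mod_cast hm)
  rw [hcard, hτ] at hupper
  have hsplit := (Nat.cast_le (α := ℝ)).2 (card_uncovered_union_image_add_le n p L R a)
  rw [Nat.cast_add] at hsplit
  simp only [union_right_comm L _ (R.image _)]
  refine hsplit.trans ((add_le_add hlower hupper).trans_eq ?_)
  rw [zpow_natCast]
  ring

theorem stmt18 (n : ℤ) (hn : 1 ≤ n) (L R : Finset ℤ)
    (hL : L ⊆ Finset.Icc 0 (n - 1)) (hR : R ⊆ Finset.Icc n (2 * n - 1))
    (a : ℤ) (ha : 2 ≤ a)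
    (haL : Finset.Icc n (2 * n - a) ⊆ L + L)
    (haR : Finset.Icc (2 * n + a - 2) (3 * n - 2) ⊆ R + R)
    (ε : ℝ) (hε : 0 < ε) :
    ∃ m₀ : ℤ, ∀ m : ℤ, m₀ ≤ m →
      (((Finset.Icc n (n + m - 1)).powerset.filter (fun M =>
          ¬ Finset.Icc (2 * n - a + 1) (2 * n + 2 * m + a - 3) ⊆
            (L ∪ M ∪ R.image (· + m)) + (L ∪ M ∪ R.image (· + m)))).card : ℝ) ≤
      (((a : ℝ) - 2) * ((2 : ℝ) ^ (-(((R.filter (fun i => n + a - 2 ≤ i)).card : ℤ)))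
              + (2 : ℝ) ^ (-(((L.filter (fun i => i ≤ n - a + 1)).card : ℤ))))
          + 6 * ((2 : ℝ) ^ (-(L.card : ℤ)) + (2 : ℝ) ^ (-(R.card : ℤ))) + ε)
          * (2 : ℝ) ^ m := by
  exact stmt18_general n L R (fun l hl ↦ Int.lt_of_le_sub_one (mem_Icc.1 (hL hl)).2)
    (fun r hr ↦ (mem_Icc.1 (hR hr)).1) a ha ε hε
end

section
/- There exist a constant c > 0 and a positive integer r_0 such that for every integer r ≥ r_0, the number of ordered pairs (A_1, A_2) of disjoint sets with A_1 ∪ A_2 = [0, r−1] such that both A_1 and A_2 are MSTD is at least c · 2^{r}. -/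
open Finset Pointwise

/-- A finite set of integers is MSTD (more-sums-than-differences) if `|A+A| > |A-A|`. -/
def MSTD (A : Finset ℤ) : Prop := (A - A).card < (A + A).card

instance (A : Finset ℤ) : Decidable (MSTD A) := by unfold MSTD; infer_instance

/-!
Prescribe the two ends, of length `38`, of a set `A ⊆ [0, N]` and let the rest of it vary. If `F`
is the bottom fringe and `G` the reflected top one, then the sums of `A` in `[0, 37]` are those of
`F + F`, its sums in the top `38` places are the reflections of those of `G + G`, and its
differences of absolute value greater than `N - 38` correspond, twice, to the elements of `F + G`
in `[0, 37]`. So if, below `38`, `F + F` and `G + G` together have more than twice as many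
elements as `F + G`, then `A` is MSTD as soon as it has all the sums in `[38, 2N - 38]`: the small
differences need no control, since missing ones only help. This condition is symmetric in `F` and
`G`, and when they partition `[0, 37]` the set `[0, N] \ A` has the fringes `G` and `F`.

The fringes used here produce the sums in `[38, 69]` by themselves. A sum `k` in `[70, N]` is missed
only if `A` contains none of the pairs `{x, k - x}`; these are disjoint and their number grows
linearly in `k`, so a union bound shows that at most `3/16` of all `A` miss one of these sums.
Reflection and complementation give four such events, and a quarter of all `A` avoid them all.
-/

/-! ### Reflection -/

section Reflect

variable {α : Type*} [AddCommGroup α] [DecidableEq α] {c x : α} {X : Finset α}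

/-- The reflection `{c - x | x ∈ X}` of `X` about `c / 2`. It exchanges the two ends of a subset of
`[0, c]`. -/
def reflect (c : α) (X : Finset α) : Finset α := {c} - X

theorem mem_reflect : x ∈ reflect c X ↔ c - x ∈ X := by
  rw [reflect, singleton_sub, mem_image]
  exact ⟨by rintro ⟨y, hy, rfl⟩; rwa [sub_sub_cancel], fun hx => ⟨c - x, hx, sub_sub_cancel c x⟩⟩

theorem reflect_reflect (c : α) (X : Finset α) : reflect c (reflect c X) = X := by
  ext x
  simp only [mem_reflect, sub_sub_cancel]

theorem card_reflect (c : α) (X : Finset α) : #(reflect c X) = #X := by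
  rw [reflect, sub_eq_add_neg, card_singleton_add, card_neg]

theorem reflect_add_reflect (c d : α) (X Y : Finset α) :
    reflect c X + reflect d Y = reflect (c + d) (X + Y) := by
  simp only [reflect, sub_add_sub_comm, singleton_add_singleton]

theorem reflect_sub (c : α) (X Y : Finset α) : reflect c (X - Y) = Y + reflect c X := by
  rw [reflect, reflect, sub_sub_eq_add_sub, add_comm, add_sub_assoc]

end Reflect

/-! ### Sums and differences near the ends -/

theorem filter_lt_add_filter_lt {α : Type*} [AddCommMonoid α] [LinearOrder α]
    [IsOrderedAddMonoid α] {A B : Finset α} (hA : ∀ x ∈ A, 0 ≤ x) (hB : ∀ y ∈ B, 0 ≤ y) (w : α) :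
    {z ∈ {x ∈ A | x < w} + {y ∈ B | y < w} | z < w} = {z ∈ A + B | z < w} := by
  refine Subset.antisymm
    (filter_subset_filter _ (add_subset_add (filter_subset _ _) (filter_subset _ _))) ?_
  intro z hz
  obtain ⟨hz, hzw⟩ := mem_filter.1 hz
  obtain ⟨x, hx, y, hy, rfl⟩ := mem_add.1 hz
  have hxw : x < w := (le_add_of_nonneg_right (hB y hy)).trans_lt hzw
  have hyw : y < w := (le_add_of_nonneg_left (hA x hx)).trans_lt hzw
  exact mem_filter.2 ⟨add_mem_add (mem_filter.2 ⟨hx, hxw⟩) (mem_filter.2 ⟨hy, hyw⟩), hzw⟩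

theorem card_eq_card_ends_add_card_inter_Icc {c w : ℤ} (hw : 2 * w ≤ c + 1) (S : Finset ℤ) :
    #S = #{x ∈ S | x < w} + #{x ∈ reflect c S | x < w} + #(S ∩ Icc w (c - w)) := by
  have hlow : {x ∈ {x ∈ S | ¬ x < w} | c - w < x} = reflect c {x ∈ reflect c S | x < w} := by
    ext x
    simp only [mem_filter, mem_reflect, sub_sub_cancel]
    grind
  have hmid : {x ∈ {x ∈ S | ¬ x < w} | ¬ c - w < x} = S ∩ Icc w (c - w) := by
    ext x
    simp only [mem_filter, mem_inter, mem_Icc, not_lt, and_assoc]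
  have hsplit := card_filter_add_card_filter_not (s := S) (· < w)
  have hsplit' := card_filter_add_card_filter_not (s := {x ∈ S | ¬ x < w}) (c - w < ·)
  rw [hlow, card_reflect, hmid] at hsplit'
  omega

theorem Icc_subset_add_self_of_reflect {N w : ℤ} {A : Finset ℤ} (hlow : Icc w N ⊆ A + A)
    (hhigh : Icc w N ⊆ reflect N A + reflect N A) : Icc w (N + N - w) ⊆ A + A := by
  intro k hk
  rw [mem_Icc] at hk
  rcases le_total k N with hkN | hNk
  · exact hlow (mem_Icc.2 ⟨hk.1, hkN⟩)
  · have hmem := hhigh (mem_Icc.2 (⟨by omega, by omega⟩ : w ≤ N + N - k ∧ N + N - k ≤ N))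
    rwa [reflect_add_reflect, mem_reflect, sub_sub_cancel] at hmem

theorem mstd_of_card_filter_lt {N w : ℤ} (hw : w ≤ N) {A : Finset ℤ}
    (hmid : Icc w (N + N - w) ⊆ A + A)
    (hends : 2 * #{x ∈ A + reflect N A | x < w} <
      #{x ∈ A + A | x < w} + #{x ∈ reflect N A + reflect N A | x < w}) : MSTD A := by
  have hsums := card_eq_card_ends_add_card_inter_Icc (c := N + N) (w := w) (by omega) (A + A)
  rw [← reflect_add_reflect, inter_eq_right.2 hmid] at hsums
  -- Up to reflection `A - A` is `A + reflect N A`, whose own symmetry makes its ends equinumerous.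
  have hdiffs := card_eq_card_ends_add_card_inter_Icc (c := N + N) (w := w) (by omega)
    (A + reflect N A)
  rw [← reflect_add_reflect, reflect_reflect, add_comm (reflect N A)] at hdiffs
  have hdiffs_mid := card_le_card (inter_subset_right (s₁ := A + reflect N A)
    (s₂ := Icc w (N + N - w)))
  rw [MSTD, ← card_reflect N, reflect_sub]
  omega

/-! ### Sets with prescribed ends -/

/-- The sets `A ⊆ [0, N]` with bottom fringe `F` and top fringe `G` of width `w`. The top fringe is
recorded after reflection, so that `G`, like `F`, is a subset of `[0, w - 1]`. -/
noncomputable def fringed (w N : ℤ) (F G : Finset ℤ) : Finset (Finset ℤ) :=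
  {A ∈ (Icc 0 N).powerset | {x ∈ A | x < w} = F ∧ {x ∈ reflect N A | x < w} = G}

section Fringed

variable {w N : ℤ} {F G A : Finset ℤ}

theorem mem_fringed : A ∈ fringed w N F G ↔
    A ⊆ Icc 0 N ∧ {x ∈ A | x < w} = F ∧ {x ∈ reflect N A | x < w} = G := by
  rw [fringed, mem_filter, mem_powerset]

theorem reflect_subset_Icc (hA : A ⊆ Icc 0 N) : reflect N A ⊆ Icc 0 N := by
  intro x hx
  have := mem_Icc.1 (hA (mem_reflect.1 hx))
  exact mem_Icc.2 (by omega)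

theorem reflect_mem_fringed (hA : A ∈ fringed w N F G) : reflect N A ∈ fringed w N G F := by
  obtain ⟨hAN, hF, hG⟩ := mem_fringed.1 hA
  exact mem_fringed.2 ⟨reflect_subset_Icc hAN, hG, by rwa [reflect_reflect]⟩

theorem filter_lt_Icc_sdiff (hw : w ≤ N + 1) (A : Finset ℤ) :
    {x ∈ Icc 0 N \ A | x < w} = Ico 0 w \ {x ∈ A | x < w} := by
  ext x
  simp only [mem_filter, mem_sdiff, mem_Icc, mem_Ico]
  grind

theorem reflect_Icc_sdiff (N : ℤ) (A : Finset ℤ) :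
    reflect N (Icc 0 N \ A) = Icc 0 N \ reflect N A := by
  ext x
  simp only [mem_reflect, mem_sdiff, mem_Icc]
  grind

theorem sdiff_mem_fringed (hw : w ≤ N + 1) (hA : A ∈ fringed w N F G) :
    Icc 0 N \ A ∈ fringed w N (Ico 0 w \ F) (Ico 0 w \ G) := by
  obtain ⟨-, hF, hG⟩ := mem_fringed.1 hA
  refine mem_fringed.2 ⟨sdiff_subset, ?_, ?_⟩
  · rw [filter_lt_Icc_sdiff hw, hF]
  · rw [reflect_Icc_sdiff, filter_lt_Icc_sdiff hw, hG]

theorem fringed_eq_Icc (hw₀ : 0 ≤ w) (hw : 2 * w ≤ N + 1) (hF : F ⊆ Ico 0 w)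
    (hG : G ⊆ Ico 0 w) :
    fringed w N F G = Icc (F ∪ reflect N G) (F ∪ reflect N G ∪ Icc w (N - w)) := by
  have hFw := fun x (hx : x ∈ F) => mem_Ico.1 (hF hx)
  have hGw := fun x (hx : x ∈ G) => mem_Ico.1 (hG hx)
  ext A
  rw [mem_fringed, mem_Icc]
  constructor
  · rintro ⟨hAN, rfl, rfl⟩
    refine ⟨fun x hx => ?_, fun x hx => ?_⟩
    · simp only [mem_union, mem_filter, mem_reflect, sub_sub_cancel] at hx
      exact hx.elim And.left And.left
    · have := mem_Icc.1 (hAN hx)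
      simp only [mem_union, mem_filter, mem_reflect, sub_sub_cancel, mem_Icc, hx, true_and]
      omega
  · rintro ⟨hlow, hupp⟩
    have hlow' := fun x => @hlow x
    have hupp' := fun x => @hupp x
    simp only [mem_union, mem_reflect, mem_Icc] at hlow' hupp'
    refine ⟨fun x hx => mem_Icc.2 ?_, ?_, ?_⟩
    · grind
    · ext x
      rw [mem_filter]
      grind
    · ext x
      rw [mem_filter, mem_reflect]
      grind

theorem card_fringed (hw₀ : 0 ≤ w) (hw : 2 * w ≤ N + 1) (hF : F ⊆ Ico 0 w)
    (hG : G ⊆ Ico 0 w) : #(fringed w N F G) = 2 ^ (N + 1 - 2 * w).toNat := by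
  have hF' := fun x (hx : x ∈ F) => mem_Ico.1 (hF hx)
  have hG' := fun x (hx : x ∈ G) => mem_Ico.1 (hG hx)
  have hdisj : Disjoint (F ∪ reflect N G) (Icc w (N - w)) := by
    rw [disjoint_left]
    intro x hx
    simp only [mem_union, mem_reflect, mem_Icc] at hx ⊢
    grind
  rw [fringed_eq_Icc hw₀ hw hF hG, card_Icc_finset subset_union_left, card_union_of_disjoint hdisj,
    Nat.add_sub_cancel_left, Int.card_Icc]
  congr 2
  ring

theorem mstd_of_mem_fringed (hw : w ≤ N) (hA : A ∈ fringed w N F G)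
    (hends : 2 * #{x ∈ F + G | x < w} < #{x ∈ F + F | x < w} + #{x ∈ G + G | x < w})
    (hlow : Icc w N ⊆ A + A) (hhigh : Icc w N ⊆ reflect N A + reflect N A) : MSTD A := by
  obtain ⟨hAN, rfl, rfl⟩ := mem_fringed.1 hA
  have hA0 : ∀ x ∈ A, 0 ≤ x := fun x hx => (mem_Icc.1 (hAN hx)).1
  have hA0' : ∀ x ∈ reflect N A, 0 ≤ x := fun x hx =>
    (mem_Icc.1 (reflect_subset_Icc hAN hx)).1
  rw [filter_lt_add_filter_lt hA0 hA0, filter_lt_add_filter_lt hA0 hA0',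
    filter_lt_add_filter_lt hA0' hA0'] at hends
  exact mstd_of_card_filter_lt hw (Icc_subset_add_self_of_reflect hlow hhigh) hends

end Fringed

/-- The members of `fringed w N F G` whose sumset misses some element of `[w, N]`: the exceptional
sets of the counting argument. Missing sums above `N` are those of the reflected set below `N`. -/
noncomputable def deficient (w N : ℤ) (F G : Finset ℤ) : Finset (Finset ℤ) :=
  {A ∈ fringed w N F G | ¬ Icc w N ⊆ A + A}

theorem Icc_subset_of_notMem_deficient {w N : ℤ} {F G A : Finset ℤ} (hA : A ∈ fringed w N F G)
    (hdef : A ∉ deficient w N F G) : Icc w N ⊆ A + A := by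
  by_contra hsub
  exact hdef (mem_filter.2 ⟨hA, hsub⟩)

section MstdPairs

variable {w N : ℤ} {F G : Finset ℤ}

theorem card_fringed_not_mstd_le (hw : w ≤ N)
    (hends : 2 * #{x ∈ F + G | x < w} < #{x ∈ F + F | x < w} + #{x ∈ G + G | x < w}) :
    #{A ∈ fringed w N F G | ¬ MSTD A} ≤ #(deficient w N F G) + #(deficient w N G F) := by
  have hsub : {A ∈ fringed w N F G | ¬ MSTD A} ⊆
      deficient w N F G ∪ (deficient w N G F).image (reflect N) := by
    intro A hA
    obtain ⟨hA, hAM⟩ := mem_filter.1 hA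
    by_contra hdef
    rw [mem_union, not_or] at hdef
    have hdef' : reflect N A ∉ deficient w N G F := fun hmem =>
      hdef.2 (mem_image.2 ⟨_, hmem, reflect_reflect N A⟩)
    exact hAM (mstd_of_mem_fringed hw hA hends (Icc_subset_of_notMem_deficient hA hdef.1)
      (Icc_subset_of_notMem_deficient (reflect_mem_fringed hA) hdef'))
  calc #{A ∈ fringed w N F G | ¬ MSTD A}
      ≤ #(deficient w N F G) + #((deficient w N G F).image (reflect N)) :=
        (card_le_card hsub).trans (card_union_le _ _)
    _ ≤ _ := by grw [card_image_le]

theorem card_fringed_not_mstd_sdiff_le (hw : w ≤ N + 1) :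
    #{A ∈ fringed w N F G | ¬ MSTD (Icc 0 N \ A)} ≤
      #{A ∈ fringed w N (Ico 0 w \ F) (Ico 0 w \ G) | ¬ MSTD A} := by
  refine card_le_card_of_injOn (Icc 0 N \ ·) (fun A hA => ?_) (fun A hA B hB hAB => ?_)
  · obtain ⟨hA, hAM⟩ := mem_filter.1 hA
    exact mem_filter.2 ⟨sdiff_mem_fringed hw hA, hAM⟩
  · have hAN := (mem_fringed.1 (mem_filter.1 hA).1).1
    have hBN := (mem_fringed.1 (mem_filter.1 hB).1).1
    rw [← Finset.sdiff_sdiff_eq_self hAN, show Icc 0 N \ A = Icc 0 N \ B from hAB,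
      Finset.sdiff_sdiff_eq_self hBN]

theorem card_fringed_le (hw : w ≤ N) (hF : F ⊆ Ico 0 w) (hG : Ico 0 w \ F = G)
    (hends : 2 * #{x ∈ F + G | x < w} < #{x ∈ F + F | x < w} + #{x ∈ G + G | x < w}) :
    #(fringed w N F G) ≤ #{A ∈ (Icc 0 N).powerset | MSTD A ∧ MSTD (Icc 0 N \ A)} +
      2 * (#(deficient w N F G) + #(deficient w N G F)) := by
  have hA := card_fringed_not_mstd_le hw hends
  have hB := card_fringed_not_mstd_sdiff_le (w := w) (N := N) (F := F) (G := G) (by omega)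
  have hends' := hends
  rw [add_comm F G, add_comm #{x ∈ F + F | x < w}] at hends'
  rw [hG, ← hG, Finset.sdiff_sdiff_eq_self hF, hG] at hB
  have hB' := hB.trans (card_fringed_not_mstd_le hw hends')
  have hcover : fringed w N F G ⊆ {A ∈ (Icc 0 N).powerset | MSTD A ∧ MSTD (Icc 0 N \ A)} ∪
      ({A ∈ fringed w N F G | ¬ MSTD A} ∪ {A ∈ fringed w N F G | ¬ MSTD (Icc 0 N \ A)}) := by
    intro A hA
    have hAN := mem_powerset.2 (mem_fringed.1 hA).1
    simp only [mem_union, mem_filter, hA, hAN, true_and]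
    tauto
  have hcard := (card_le_card hcover).trans (card_union_le _ _)
  have hunion := card_union_le {A ∈ fringed w N F G | ¬ MSTD A}
    {A ∈ fringed w N F G | ¬ MSTD (Icc 0 N \ A)}
  omega

end MstdPairs

/-! ### Counting sets that miss a sum -/

section Avoid

variable {α ι : Type*} [DecidableEq α] {𝓕 : Finset (Finset α)} {m : ℕ}

theorem card_filter_not_subset_le {B : Finset α} (hB : #B ≤ m) (h𝓕 : ∀ A ∈ 𝓕, A ∪ B ∈ 𝓕) :
    (#{A ∈ 𝓕 | ¬ B ⊆ A} : ℝ) ≤ (1 - (1 / 2) ^ m) * #𝓕 := by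
  -- A set `A` is recovered from `A ∪ B` and `A ∩ B`.
  have hinj : #𝓕 ≤ #({A ∈ 𝓕 | B ⊆ A} ×ˢ B.powerset) := by
    refine card_le_card_of_injOn (fun A => (A ∪ B, A ∩ B)) (fun A hA => ?_)
      (fun A _ A' _ h => ?_)
    · exact mem_product.2 ⟨mem_filter.2 ⟨h𝓕 A hA, subset_union_right⟩,
        mem_powerset.2 inter_subset_right⟩
    · obtain ⟨hunion, hinter⟩ := Prod.mk.inj h
      exact eq_of_inf_eq_sup_eq hinter hunion
  have hle : (#𝓕 : ℝ) ≤ #{A ∈ 𝓕 | B ⊆ A} * 2 ^ m := by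
    rw [card_product, card_powerset] at hinj
    exact_mod_cast hinj.trans (by gcongr; norm_num)
  have hsplit : (#{A ∈ 𝓕 | B ⊆ A} : ℝ) + #{A ∈ 𝓕 | ¬ B ⊆ A} = #𝓕 := by
    exact_mod_cast card_filter_add_card_filter_not (s := 𝓕) (B ⊆ ·)
  have hhalf : (1 / 2 : ℝ) ^ m * #𝓕 ≤ #{A ∈ 𝓕 | B ⊆ A} := by
    rw [one_div_pow, one_div_mul_eq_div]
    exact div_le_of_le_mul₀ (by positivity) (by positivity) hle
  linarith

theorem card_filter_forall_not_subset_le {I : Finset ι} {B : ι → Finset α}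
    (hB : ∀ i ∈ I, #(B i) ≤ m) (hdisj : (I : Set ι).PairwiseDisjoint B)
    (h𝓕 : ∀ i ∈ I, ∀ A ∈ 𝓕, A ∪ B i ∈ 𝓕) :
    (#{A ∈ 𝓕 | ∀ i ∈ I, ¬ B i ⊆ A} : ℝ) ≤ (1 - (1 / 2) ^ m) ^ #I * #𝓕 := by
  classical
  induction I using Finset.induction_on with
  | empty => simp
  | insert a I ha ih =>
    simp only [forall_mem_insert] at hB h𝓕 ⊢
    have hdisj_a : ∀ i ∈ I, Disjoint (B i) (B a) := fun i hi =>
      hdisj (mem_insert_of_mem hi) (mem_insert_self a I) (ne_of_mem_of_not_mem hi ha)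
    have hclosed : ∀ A ∈ {A ∈ 𝓕 | ∀ i ∈ I, ¬ B i ⊆ A},
        A ∪ B a ∈ {A ∈ 𝓕 | ∀ i ∈ I, ¬ B i ⊆ A} := by
      intro A hA
      obtain ⟨hA, havoid⟩ := mem_filter.1 hA
      exact mem_filter.2 ⟨h𝓕.1 A hA, fun i hi hsub =>
        havoid i hi ((hdisj_a i hi).left_le_of_le_sup_right hsub)⟩
    have hrest := ih hB.2 (hdisj.subset (by simp)) h𝓕.2
    have hfactor : (0 : ℝ) ≤ 1 - (1 / 2) ^ m :=
      sub_nonneg.2 (pow_le_one₀ (by norm_num) (by norm_num))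
    calc (#{A ∈ 𝓕 | ¬ B a ⊆ A ∧ ∀ i ∈ I, ¬ B i ⊆ A} : ℝ)
        = #{A ∈ {A ∈ 𝓕 | ∀ i ∈ I, ¬ B i ⊆ A} | ¬ B a ⊆ A} := by
          simp only [filter_filter, and_comm]
      _ ≤ (1 - (1 / 2) ^ m) * #{A ∈ 𝓕 | ∀ i ∈ I, ¬ B i ⊆ A} :=
          card_filter_not_subset_le hB.1 hclosed
      _ ≤ (1 - (1 / 2) ^ m) * ((1 - (1 / 2) ^ m) ^ #I * #𝓕) := by gcongr
      _ = (1 - (1 / 2) ^ m) ^ #(insert a I) * #𝓕 := by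
          rw [card_insert_of_notMem ha, pow_succ', mul_assoc]

end Avoid

/-- The smaller summands of the representations of `k` as a sum of two elements of `T`, one for each
of the pairs `{x, k - x}` that `A ⊆ T` has to avoid if `k` is not in `A + A`. -/
def smallerSummands (T : Finset ℤ) (k : ℤ) : Finset ℤ := {x ∈ T | 2 * x ≤ k ∧ k - x ∈ T}

theorem mem_smallerSummands {T : Finset ℤ} {k x : ℤ} :
    x ∈ smallerSummands T k ↔ x ∈ T ∧ 2 * x ≤ k ∧ k - x ∈ T :=
  mem_filter

theorem card_filter_Icc_notMem_add_le (S T : Finset ℤ) (k : ℤ) :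
    (#{A ∈ Icc S T | k ∉ A + A} : ℝ) ≤ (3 / 4) ^ #(smallerSummands T k) * #(Icc S T) := by
  have hsub : {A ∈ Icc S T | k ∉ A + A} ⊆
      {A ∈ Icc S T | ∀ x ∈ smallerSummands T k, ¬ {x, k - x} ⊆ A} := by
    refine monotone_filter_right _ fun A _ hk x _ hxA => hk (mem_add.2 ⟨x, ?_, k - x, ?_, ?_⟩)
    · exact hxA (mem_insert_self _ _)
    · exact hxA (mem_insert_of_mem (mem_singleton_self _))
    · exact add_sub_cancel x k
  have hdisj : (smallerSummands T k : Set ℤ).PairwiseDisjoint fun x => ({x, k - x} : Finset ℤ) := by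
    intro x hx y hy hxy
    have hx := (mem_smallerSummands.1 hx).2.1
    have hy := (mem_smallerSummands.1 hy).2.1
    simp only [Function.onFun, disjoint_left, mem_insert, mem_singleton]
    omega
  have hclosed : ∀ x ∈ smallerSummands T k, ∀ A ∈ Icc S T, A ∪ {x, k - x} ∈ Icc S T := by
    intro x hx A hA
    obtain ⟨hxT, -, hkxT⟩ := mem_smallerSummands.1 hx
    obtain ⟨hSA, hAT⟩ := mem_Icc.1 hA
    refine mem_Icc.2 ⟨hSA.trans subset_union_left, union_subset hAT ?_⟩
    exact insert_subset hxT (singleton_subset_iff.2 hkxT)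
  calc (#{A ∈ Icc S T | k ∉ A + A} : ℝ)
      ≤ #{A ∈ Icc S T | ∀ x ∈ smallerSummands T k, ¬ {x, k - x} ⊆ A} := by
        exact_mod_cast card_le_card hsub
    _ ≤ (1 - (1 / 2) ^ 2) ^ #(smallerSummands T k) * #(Icc S T) :=
        card_filter_forall_not_subset_le (fun _ _ => card_le_two) hdisj hclosed
    _ = _ := by norm_num

section FringesOfWidth38

variable {N k : ℤ} {F G : Finset ℤ}

theorem le_card_smallerSummands (hN : 250 ≤ N) (hF : F ⊆ Ico 0 38)
    (hF16 : 16 ≤ #{x ∈ F | x ≤ 32}) (hk : 70 ≤ k) (hkN : k ≤ N) :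
    k - 27 ≤ 3 * #(smallerSummands (F ∪ reflect N G ∪ Icc 38 (N - 38)) k) := by
  set P := smallerSummands (F ∪ reflect N G ∪ Icc 38 (N - 38)) k
  have hmiddle : Icc 38 (k / 2) ⊆ P := by
    intro x hx
    rw [mem_Icc] at hx
    simp only [P, mem_smallerSummands, mem_union, mem_Icc]
    omega
  rcases le_or_gt k (N - 38) with hkN' | hkN'
  · have hfringe : {x ∈ F | x ≤ 32} ⊆ P := by
      intro x hx
      obtain ⟨hxF, hx32⟩ := mem_filter.1 hx
      have hx0 := mem_Ico.1 (hF hxF)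
      simp only [P, mem_smallerSummands, mem_union, mem_Icc, hxF, true_or, true_and]
      omega
    have hdisj : Disjoint {x ∈ F | x ≤ 32} (Icc 38 (k / 2)) := by
      simp only [disjoint_left, mem_filter, mem_Icc]
      omega
    have hcard := card_le_card (union_subset hfringe hmiddle)
    rw [card_union_of_disjoint hdisj, Int.card_Icc] at hcard
    omega
  · -- Here `k - x` may fall into the top fringe for `x ∈ F`, but the middle pairs alone suffice.
    have hcard := card_le_card hmiddle
    rw [Int.card_Icc] at hcard
    omega

-- `10 / 11` is chosen slightly above the cube root of `3 / 4`.
theorem three_div_four_pow_le {i t : ℕ} (hit : i ≤ 3 * t) : (3 / 4 : ℝ) ^ t ≤ (10 / 11) ^ i :=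
  calc (3 / 4 : ℝ) ^ t ≤ ((10 / 11) ^ 3) ^ t := by gcongr; norm_num
    _ = (10 / 11) ^ (3 * t) := (pow_mul _ _ _).symm
    _ ≤ (10 / 11) ^ i := pow_le_pow_of_le_one (by norm_num) (by norm_num) hit

theorem card_fringed_notMem_add_le (hN : 250 ≤ N) (hF : F ⊆ Ico 0 38) (hG : G ⊆ Ico 0 38)
    (hF16 : 16 ≤ #{x ∈ F | x ≤ 32}) {i : ℕ} (hi : 43 ≤ i) (hiN : i + 27 ≤ N) :
    (#{A ∈ fringed 38 N F G | (i + 27 : ℤ) ∉ A + A} : ℝ) ≤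
      (10 / 11) ^ i * #(fringed 38 N F G) := by
  have hcard := le_card_smallerSummands (G := G) hN hF hF16 (by omega : (70 : ℤ) ≤ i + 27) hiN
  rw [fringed_eq_Icc (by norm_num) (by omega) hF hG]
  refine (card_filter_Icc_notMem_add_le _ _ _).trans ?_
  gcongr
  exact three_div_four_pow_le (by omega)

theorem card_deficient_le (hN : 250 ≤ N) (hF : F ⊆ Ico 0 38) (hG : G ⊆ Ico 0 38)
    (hF16 : 16 ≤ #{x ∈ F | x ≤ 32}) (hFF : Ico 38 70 ⊆ F + F) :
    (#(deficient 38 N F G) : ℝ) ≤ 3 / 16 * #(fringed 38 N F G) := by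
  have hsub : deficient 38 N F G ⊆ (Ico 43 (N - 26).toNat).biUnion fun i =>
      {A ∈ fringed 38 N F G | (i + 27 : ℤ) ∉ A + A} := by
    intro A hA
    obtain ⟨hA, hmiss⟩ := mem_filter.1 hA
    obtain ⟨k, hk, hkA⟩ := not_subset.1 hmiss
    rw [mem_Icc] at hk
    have hFA : F ⊆ A := (mem_fringed.1 hA).2.1 ▸ filter_subset _ _
    have hk70 : 70 ≤ k := by
      by_contra! hlt
      exact hkA (add_subset_add hFA hFA (hFF (mem_Ico.2 ⟨hk.1, hlt⟩)))
    have hki : (((k - 27).toNat : ℕ) : ℤ) + 27 = k := by omega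
    refine mem_biUnion.2 ⟨(k - 27).toNat, mem_Ico.2 (by omega), mem_filter.2 ⟨hA, ?_⟩⟩
    rwa [hki]
  calc (#(deficient 38 N F G) : ℝ)
      ≤ ∑ i ∈ Ico 43 (N - 26).toNat, (#{A ∈ fringed 38 N F G | (i + 27 : ℤ) ∉ A + A} : ℝ) := by
        exact_mod_cast (card_le_card hsub).trans card_biUnion_le
    _ ≤ ∑ i ∈ Ico 43 (N - 26).toNat, (10 / 11 : ℝ) ^ i * #(fringed 38 N F G) := by
        refine sum_le_sum fun i hi => ?_
        rw [mem_Ico] at hi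
        exact card_fringed_notMem_add_le hN hF hG hF16 hi.1 (by omega)
    _ = (∑ i ∈ Ico 43 (N - 26).toNat, (10 / 11 : ℝ) ^ i) * #(fringed 38 N F G) :=
        (sum_mul _ _ _).symm
    _ ≤ (10 / 11) ^ 43 / (1 - 10 / 11) * #(fringed 38 N F G) := by
        gcongr
        exact geom_sum_Ico_le_of_lt_one (by norm_num) (by norm_num)
    _ ≤ 3 / 16 * #(fringed 38 N F G) :=
        mul_le_mul_of_nonneg_right (by norm_num) (Nat.cast_nonneg _)

end FringesOfWidth38

/-! ### The two fringes -/

/-- The bottom fringe of the first part `A₁`, found by computer search. -/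
def leftFringe : Finset ℤ :=
  {0, 1, 3, 5, 6, 13, 14, 16, 18, 19, 21, 22, 25, 26, 29, 31, 33, 34, 35}

/-- The reflected top fringe of `A₁`, which is also the bottom fringe of the second part. -/
noncomputable def rightFringe : Finset ℤ := Ico 0 38 \ leftFringe

theorem leftFringe_subset : leftFringe ⊆ Ico 0 38 := by decide +kernel

theorem rightFringe_subset : rightFringe ⊆ Ico 0 38 := sdiff_subset

theorem le_card_filter_leftFringe : 16 ≤ #{x ∈ leftFringe | x ≤ 32} := by decide

theorem le_card_filter_rightFringe : 16 ≤ #{x ∈ rightFringe | x ≤ 32} := by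
  unfold rightFringe
  decide +kernel

theorem Ico_subset_leftFringe_add_leftFringe : Ico 38 70 ⊆ leftFringe + leftFringe := by
  decide +kernel

theorem Ico_subset_rightFringe_add_rightFringe : Ico 38 70 ⊆ rightFringe + rightFringe := by
  unfold rightFringe
  decide +kernel

theorem two_mul_card_leftFringe_add_rightFringe_lt :
    2 * #{x ∈ leftFringe + rightFringe | x < 38} <
      #{x ∈ leftFringe + leftFringe | x < 38} + #{x ∈ rightFringe + rightFringe | x < 38} := by
  unfold rightFringe
  decide +kernel

theorem stmt19 : ∃ c : ℝ, 0 < c ∧ ∃ r₀ : ℕ, 0 < r₀ ∧ ∀ r : ℕ, r₀ ≤ r →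
    c * 2 ^ r ≤
      (((Finset.Icc (0 : ℤ) ((r : ℤ) - 1)).powerset.filter (fun A =>
          MSTD A ∧ MSTD (Finset.Icc (0 : ℤ) ((r : ℤ) - 1) \ A))).card : ℝ) := by
  -- `76` of the `r` positions are prescribed, and `1 - 4 * (3 / 16) = 1 / 4`.
  refine ⟨1 / 2 ^ 78, by positivity, 251, by norm_num, fun r hr => ?_⟩
  have hN : 250 ≤ (r : ℤ) - 1 := by omega
  have hexp : ((r : ℤ) - 1 + 1 - 2 * 38).toNat = r - 76 := by omega
  have hle := card_fringed_le (by omega : 38 ≤ (r : ℤ) - 1) leftFringe_subset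
    (G := rightFringe) rfl two_mul_card_leftFringe_add_rightFringe_lt
  have hleft := card_deficient_le hN leftFringe_subset rightFringe_subset
    le_card_filter_leftFringe Ico_subset_leftFringe_add_leftFringe
  have hright := card_deficient_le hN rightFringe_subset leftFringe_subset
    le_card_filter_rightFringe Ico_subset_rightFringe_add_rightFringe
  rw [card_fringed (by norm_num) (by omega) rightFringe_subset leftFringe_subset, hexp] at hright
  rw [card_fringed (by norm_num) (by omega) leftFringe_subset rightFringe_subset, hexp] at hle hleft
  rify at hle hleft hright
  calc (1 / 2 ^ 78 : ℝ) * 2 ^ r = (1 - 4 * (3 / 16)) * 2 ^ (r - 76) := by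
        rw [← Nat.sub_add_cancel (by omega : 76 ≤ r), pow_add]
        norm_num
        ring
    _ ≤ _ := by linarith
end
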